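/- Let d ∈ ℕ and let (X_i)_{i∈ℕ} be a strictly stationary sequence of S_d-valued random vectors whose strong mixing coefficient satisfies α(m) ≪ m^{−ν} for some ν > 1. Let s ∈ Int(S_d), let b = b(n) → 0, and let (β_n) be integers with 1 ≤ β_n ≤ n−1. Then the far-off-diagonal covariance sum C_{2,n} = Σ_{β_n+1 ≤ |i−j| ≤ n−1, 1 ≤ i,j ≤ n} Cov(κ_{s,b}(X_i), κ_{s,b}(X_j)) satisfies |C_{2,n}| ≪_s n b^{−d} β_n^{−ν+1} as n → ∞. -/

import Mathlib

open MeasureTheory Filter Asymptotics Real Topology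

noncomputable section

/-- The `d`-dimensional simplex `S_d = {s ∈ [0,1]^d : ‖s‖₁ ≤ 1}`. -/
def Sd (d : ℕ) : Set (Fin d → ℝ) :=
  {s | (∀ i, s i ∈ Set.Icc (0 : ℝ) 1) ∧ ∑ i, |s i| ≤ 1}

/-- The interior of the simplex, `Int(S_d) = {s ∈ (0,1)^d : ‖s‖₁ < 1}`. -/
def SdInt (d : ℕ) : Set (Fin d → ℝ) :=
  {s | (∀ i, s i ∈ Set.Ioo (0 : ℝ) 1) ∧ ∑ i, |s i| < 1}

/-- The Dirichlet(u, v) density on the simplex, evaluated at `x`. -/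
def dirK (d : ℕ) (u : Fin d → ℝ) (v : ℝ) (x : Fin d → ℝ) : ℝ :=
  (Real.Gamma (∑ i, u i + v) / (Real.Gamma v * ∏ i, Real.Gamma (u i))) *
    (1 - ∑ i, x i) ^ (v - 1) * ∏ i, (x i) ^ (u i - 1)

/-- The Dirichlet kernel `κ_{s,b} = K_{s/b+1, (1-‖s‖₁)/b+1}`. -/
def kappa (d : ℕ) (s : Fin d → ℝ) (b : ℝ) (x : Fin d → ℝ) : ℝ :=
  dirK d (fun i => s i / b + 1) ((1 - ∑ i, s i) / b + 1) x

/-- `ψ(s) = (4π)^{-d/2} / ((1-‖s‖₁)^{1/2} ∏ s_i^{1/2})`. -/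
def psiFun (d : ℕ) (s : Fin d → ℝ) : ℝ :=
  (4 * π) ^ (-(d : ℝ) / 2) /
    ((1 - ∑ i, s i) ^ ((1 : ℝ) / 2) * ∏ i, (s i) ^ ((1 : ℝ) / 2))

/-- The Dirichlet kernel density estimator `f̂_{n,b}(s)`. -/
def fhat {Ω : Type*} (d n : ℕ) (b : ℝ) (X : ℕ → Ω → (Fin d → ℝ))
    (s : Fin d → ℝ) (ω : Ω) : ℝ :=
  (n : ℝ)⁻¹ * ∑ i ∈ Finset.Icc 1 n, kappa d s b (X i ω)

/-- The strong mixing (α-mixing) coefficient of the sequence `X`. -/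
def alphaMix {Ω : Type*} [MeasurableSpace Ω] (P : Measure Ω)
    {d : ℕ} (X : ℕ → Ω → (Fin d → ℝ)) (m : ℕ) : ℝ :=
  sSup {r : ℝ | ∃ k : ℕ, 1 ≤ k ∧ ∃ A B : Set Ω,
    MeasurableSet[⨆ i ∈ Set.Icc 1 k, MeasurableSpace.comap (X i) inferInstance] A ∧
    MeasurableSet[⨆ i ∈ Set.Ici (k + m), MeasurableSpace.comap (X i) inferInstance] B ∧
    r = |(P (A ∩ B)).toReal - (P A).toReal * (P B).toReal|}

/-- Strict stationarity of the sequence `X` (indexed from 1). -/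
def IsStrictlyStationary {Ω : Type*} [MeasurableSpace Ω] (P : Measure Ω)
    {d : ℕ} (X : ℕ → Ω → (Fin d → ℝ)) : Prop :=
  ∀ k n : ℕ,
    Measure.map (fun ω => fun t : Fin n => X (t.1 + 1 + k) ω) P =
      Measure.map (fun ω => fun t : Fin n => X (t.1 + 1) ω) P

/-- Covariance of two real random variables. -/
def cov {Ω : Type*} [MeasurableSpace Ω] (P : Measure Ω) (Y Z : Ω → ℝ) : ℝ :=
  ∫ ω, Y ω * Z ω ∂P - (∫ ω, Y ω ∂P) * (∫ ω, Z ω ∂P)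

/-- The bias functional `g(s)` from Theorem MSE. -/
def gfun (d : ℕ) (f : (Fin d → ℝ) → ℝ) (s : Fin d → ℝ) : ℝ :=
  (∑ i, (1 - ((d : ℝ) + 1) * s i) * fderiv ℝ f s (Pi.single i 1)) +
    (1 / 2) * ∑ i, ∑ j, s i * ((if i = j then (1 : ℝ) else 0) - s j) *
      fderiv ℝ (fun t => fderiv ℝ f t (Pi.single i 1)) s (Pi.single j 1)

/-- The centered kernel variable `Ξ_{i,n}(s)`. -/
def Xi {Ω : Type*} [MeasurableSpace Ω] (P : Measure Ω) {d : ℕ}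
    (X : ℕ → Ω → (Fin d → ℝ)) (s : Fin d → ℝ) (b : ℝ) (i : ℕ) (ω : Ω) : ℝ :=
  kappa d s b (X i ω) - ∫ ω', kappa d s b (X i ω') ∂P

/-- The `j`-th big block of indices `I_j`. -/
def bigBlock (pn qn j : ℕ) : Finset ℕ :=
  Finset.Icc ((j - 1) * (pn + qn) + 1) ((j - 1) * (pn + qn) + pn)

/-- The `j`-th small block of indices `J_j`. -/
def smallBlock (pn qn j : ℕ) : Finset ℕ :=
  Finset.Icc ((j - 1) * (pn + qn) + pn + 1) (j * (pn + qn))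

/-- Assumption (A2): pairwise joint densities exist and the local dependence
functions `h_{i,j} = f_{X_i,X_j} - f_{X_i} f_{X_j}` have uniformly bounded `L^p` norms. -/
def AssumpA2 {Ω : Type*} [MeasurableSpace Ω] (P : Measure Ω) {d : ℕ}
    (X : ℕ → Ω → (Fin d → ℝ)) (f : (Fin d → ℝ) → ℝ) (p : ℝ) : Prop :=
  ∃ fpair : ℕ → ℕ → ((Fin d → ℝ) × (Fin d → ℝ)) → ℝ,
    (∀ i j : ℕ, 1 ≤ i → 1 ≤ j → i ≠ j →
      Measure.map (fun ω => (X i ω, X j ω)) P =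
        volume.withDensity (fun z => ENNReal.ofReal (fpair i j z))) ∧
    (∀ i j : ℕ, 1 ≤ i → 1 ≤ j → i ≠ j →
      Integrable (fun z => |fpair i j z - f z.1 * f z.2| ^ p)
        (volume.restrict (Sd d ×ˢ Sd d))) ∧
    ∃ C : ℝ, ∀ i j : ℕ, 1 ≤ i → 1 ≤ j → i ≠ j →
      (∫ z in Sd d ×ˢ Sd d, |fpair i j z - f z.1 * f z.2| ^ p) ^ (1 / p) ≤ C

/-- Stirling ratio `R(z) = √(2π) e^{-z} z^{z+1/2} / Γ(z+1)`. -/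
def Rfun (z : ℝ) : ℝ :=
  Real.sqrt (2 * π) * Real.exp (-z) * z ^ (z + 1 / 2) / Real.Gamma (z + 1)

end

/-!
In barycentric coordinates `p` of `s` and `q` of `x`, the kernel is
`κ_{s,b}(x) = c ∏ q_i ^ (p_i / b)` with `c` depending only on `s` and `b`, so by weighted AM-GM it
is maximal at `x = s`. There Stirling's formula gives `κ_{s,b}(s) ≍ b ^ (-d/2)`: the mode of a
multinomial law on `d + 1` cells with `1/b` trials has probability of order `b ^ (d/2)`, and the
shift of the parameters by one contributes a factor `b ^ (-d)`.

Slicing both variables into their superlevel sets turns a covariance into a double integral of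
`P(A ∩ B) - P(A) P(B)`, hence `|Cov(κ(X_i), κ(X_j))| ≤ κ(s)² α(|i - j|)`. At most two indices `j`
lie at a given distance from `i`, so each of the `n` rows contributes at most a constant times
`b ^ (-d) ∑_{k > β} k ^ (-ν) ≲ b ^ (-d) β ^ (1 - ν)`.
-/

section GammaAsymptotics

lemma isTheta_comp_tendsto {α β E F : Type*} [Norm E] [Norm F] {f : β → E} {g : β → F}
    {l : Filter β} {l' : Filter α} {k : α → β} (h : f =Θ[l] g) (hk : Tendsto k l' l) :
    (fun a ↦ f (k a)) =Θ[l'] fun a ↦ g (k a) :=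
  ⟨h.1.comp_tendsto hk, h.2.comp_tendsto hk⟩

lemma Gamma_add_le_rpow_mul_Gamma {x t : ℝ} (hx : 0 < x) (ht : t ∈ Set.Icc 0 1) :
    Gamma (x + t) ≤ x ^ t * Gamma x := by
  obtain ⟨ht0, ht1⟩ := ht
  rcases ht0.eq_or_lt with rfl | ht0
  · simp
  rcases ht1.eq_or_lt with rfl | ht1
  · rw [rpow_one, Gamma_add_one hx.ne']
  have hΓ : 0 < Gamma x := Gamma_pos_of_pos hx
  calc Gamma (x + t)
      = Gamma ((1 - t) * x + t * (x + 1)) := by ring_nf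
    _ ≤ Gamma x ^ (1 - t) * Gamma (x + 1) ^ t :=
        Gamma_mul_add_mul_le_rpow_Gamma_mul_rpow_Gamma hx (by positivity) (sub_pos.2 ht1) ht0
          (sub_add_cancel 1 t)
    _ = x ^ t * Gamma x := by
        rw [Gamma_add_one hx.ne', mul_rpow hx.le hΓ.le, mul_left_comm, ← rpow_add hΓ,
          sub_add_cancel, rpow_one]

lemma floor_factorial_mul_rpow_le_Gamma_add_one {x : ℝ} (hx : 0 < x) :
    (⌊x⌋₊.factorial : ℝ) * x ^ (x - ⌊x⌋₊) ≤ Gamma (x + 1) := by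
  have hfloor : (⌊x⌋₊ : ℝ) ≤ x := Nat.floor_le hx.le
  have hlt : x < ⌊x⌋₊ + 1 := Nat.lt_floor_add_one x
  calc (⌊x⌋₊.factorial : ℝ) * x ^ (x - ⌊x⌋₊)
      = Gamma (x + (⌊x⌋₊ + 1 - x)) * x ^ (x - ⌊x⌋₊) := by
        rw [add_sub_cancel, Gamma_nat_eq_factorial]
    _ ≤ x ^ (⌊x⌋₊ + 1 - x) * Gamma x * x ^ (x - ⌊x⌋₊) := by
        gcongr
        exact Gamma_add_le_rpow_mul_Gamma hx ⟨by linarith, by linarith⟩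
    _ = Gamma (x + 1) := by
        rw [mul_right_comm, ← rpow_add hx, Gamma_add_one hx.ne']
        ring_nf
        rw [rpow_one]

lemma Gamma_add_one_le_two_mul_floor_factorial_mul_rpow {x : ℝ} (hx : 1 ≤ x) :
    Gamma (x + 1) ≤ 2 * (⌊x⌋₊.factorial * x ^ (x - ⌊x⌋₊)) := by
  have hx0 : 0 ≤ x := zero_le_one.trans hx
  have hfloor : (⌊x⌋₊ : ℝ) ≤ x := Nat.floor_le hx0
  have hlt : x < ⌊x⌋₊ + 1 := Nat.lt_floor_add_one x
  calc Gamma (x + 1)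
      = Gamma (⌊x⌋₊ + 1 + (x - ⌊x⌋₊)) := by ring_nf
    _ ≤ (⌊x⌋₊ + 1) ^ (x - ⌊x⌋₊) * Gamma (⌊x⌋₊ + 1) :=
        Gamma_add_le_rpow_mul_Gamma (by positivity) ⟨by linarith, by linarith⟩
    _ ≤ (2 * x) ^ (x - ⌊x⌋₊) * Gamma (⌊x⌋₊ + 1) := by
        gcongr
        linarith
    _ = 2 ^ (x - ⌊x⌋₊) * (⌊x⌋₊.factorial * x ^ (x - ⌊x⌋₊)) := by
        rw [mul_rpow zero_le_two hx0, Gamma_nat_eq_factorial]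
        ring
    _ ≤ 2 * (⌊x⌋₊.factorial * x ^ (x - ⌊x⌋₊)) := by
        gcongr
        simpa using rpow_le_rpow_of_exponent_le one_le_two (by linarith : x - ⌊x⌋₊ ≤ 1)

lemma Gamma_add_one_isTheta_floor_factorial_mul_rpow :
    (fun x : ℝ ↦ Gamma (x + 1)) =Θ[atTop] fun x ↦ (⌊x⌋₊.factorial : ℝ) * x ^ (x - ⌊x⌋₊) := by
  have hnorm {x : ℝ} (hx : 1 ≤ x) : ‖Gamma (x + 1)‖ = Gamma (x + 1) :=
    norm_of_nonneg (Gamma_pos_of_pos (by positivity)).le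
  refine ⟨IsBigO.of_bound 2 ?_, IsBigO.of_bound 1 ?_⟩
  · filter_upwards [eventually_ge_atTop 1] with x hx
    rw [hnorm hx, norm_of_nonneg (by positivity)]
    exact Gamma_add_one_le_two_mul_floor_factorial_mul_rpow hx
  · filter_upwards [eventually_ge_atTop 1] with x hx
    rw [hnorm hx, norm_of_nonneg (by positivity), one_mul]
    exact floor_factorial_mul_rpow_le_Gamma_add_one (by positivity)

lemma factorial_isTheta_rpow_mul_exp :
    (fun n : ℕ ↦ (n.factorial : ℝ)) =Θ[atTop]
      fun n : ℕ ↦ (n : ℝ) ^ ((n : ℝ) + 1 / 2) * exp (-n) := by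
  refine Stirling.factorial_isEquivalent_stirling.isTheta.trans ?_
  have heq : (fun n : ℕ ↦ √(2 * n * π) * (n / exp 1) ^ n) =ᶠ[atTop]
      fun n : ℕ ↦ √(2 * π) * ((n : ℝ) ^ ((n : ℝ) + 1 / 2) * exp (-n)) := by
    filter_upwards [eventually_gt_atTop 0] with n hn
    have hn' : (0 : ℝ) < n := Nat.cast_pos.2 hn
    rw [mul_right_comm, sqrt_mul (by positivity), rpow_add hn', rpow_natCast, sqrt_eq_rpow (n : ℝ),
      div_pow, ← exp_nat_mul, mul_one, exp_neg, div_eq_mul_inv]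
    ring
  exact heq.isTheta.trans ((isTheta_const_mul_left (by positivity)).2 (isTheta_refl _ _))

lemma rpow_floor_add_half_isTheta :
    (fun x : ℝ ↦ (⌊x⌋₊ : ℝ) ^ ((⌊x⌋₊ : ℝ) + 1 / 2)) =Θ[atTop]
      fun x ↦ x ^ ((⌊x⌋₊ : ℝ) + 1 / 2) := by
  refine ⟨IsBigO.of_bound 1 ?_, IsBigO.of_bound (exp (3 / 2)) ?_⟩
  · filter_upwards [eventually_ge_atTop 0] with x hx
    rw [norm_of_nonneg (by positivity), norm_of_nonneg (by positivity), one_mul]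
    gcongr
    exact Nat.floor_le hx
  · filter_upwards [eventually_ge_atTop 1] with x hx
    have hn : (1 : ℝ) ≤ ⌊x⌋₊ := by exact_mod_cast Nat.le_floor (by simpa using hx)
    have hlt : x < ⌊x⌋₊ + 1 := Nat.lt_floor_add_one x
    generalize (⌊x⌋₊ : ℝ) = n at *
    have hn0 : 0 < n := by positivity
    rw [norm_of_nonneg (by positivity), norm_of_nonneg (by positivity)]
    calc x ^ (n + 1 / 2)
        ≤ (exp (1 / n) * n) ^ (n + 1 / 2) := by
          gcongr
          have := mul_le_mul_of_nonneg_right (add_one_le_exp (1 / n)) hn0.le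
          rw [add_mul, div_mul_cancel₀ _ hn0.ne'] at this
          linarith
      _ = exp (1 + 1 / 2 / n) * n ^ (n + 1 / 2) := by
          rw [mul_rpow (by positivity) hn0.le, ← exp_mul]
          congr 2
          field_simp
      _ ≤ exp (3 / 2) * n ^ (n + 1 / 2) := by
          gcongr
          linarith [div_le_self (by norm_num : (0 : ℝ) ≤ 1 / 2) hn]

lemma exp_neg_floor_isTheta :
    (fun x : ℝ ↦ exp (-⌊x⌋₊)) =Θ[atTop] fun x ↦ exp (-x) := by
  refine isTheta_exp_comp_exp_comp.2 (isBoundedUnder_of_eventually_le (a := 1) ?_)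
  filter_upwards [eventually_ge_atTop 0] with x hx
  rw [abs_le]
  constructor <;> linarith [Nat.floor_le hx, Nat.lt_floor_add_one x]

lemma Gamma_add_one_isTheta_rpow_mul_exp :
    (fun x : ℝ ↦ Gamma (x + 1)) =Θ[atTop] fun x ↦ x ^ (x + 1 / 2) * exp (-x) := by
  have hfactorial : (fun x : ℝ ↦ (⌊x⌋₊.factorial : ℝ)) =Θ[atTop]
      fun x ↦ x ^ ((⌊x⌋₊ : ℝ) + 1 / 2) * exp (-x) :=
    (isTheta_comp_tendsto factorial_isTheta_rpow_mul_exp tendsto_nat_floor_atTop).trans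
      (rpow_floor_add_half_isTheta.mul exp_neg_floor_isTheta)
  refine (Gamma_add_one_isTheta_floor_factorial_mul_rpow.trans
    (hfactorial.mul (isTheta_refl _ _))).trans_eventuallyEq ?_
  filter_upwards [eventually_gt_atTop 0] with x hx
  rw [mul_right_comm, ← rpow_add hx]
  ring_nf

lemma Gamma_add_natCast_add_one_isTheta (k : ℕ) :
    (fun x : ℝ ↦ Gamma (x + k + 1)) =Θ[atTop] fun x ↦ x ^ k * Gamma (x + 1) := by
  induction k with
  | zero => simpa using isTheta_refl _ _
  | succ k ih =>
    have hlinear : (fun x : ℝ ↦ x + (k + 1)) =Θ[atTop] fun x ↦ x :=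
      (isTheta_refl _ _).add_isLittleO (isLittleO_const_id_atTop _)
    have hrec : (fun x : ℝ ↦ Gamma (x + (k + 1 : ℕ) + 1)) =ᶠ[atTop]
        fun x ↦ (x + (k + 1)) * Gamma (x + k + 1) := by
      filter_upwards [eventually_gt_atTop 0] with x hx
      rw [Nat.cast_succ, ← add_assoc, Gamma_add_one (by positivity)]
    refine (hrec.trans_isTheta (hlinear.mul ih)).trans_eventuallyEq (.of_eq ?_)
    ext x
    ring

end GammaAsymptotics

section DirichletKernel

lemma prod_rpow_le_prod_rpow_self {ι : Type*} [Fintype ι] {p q : ι → ℝ}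
    (hp : p ∈ stdSimplex ℝ ι) (hq : q ∈ stdSimplex ℝ ι) :
    ∏ i, q i ^ p i ≤ ∏ i, p i ^ p i := by
  have hratio : ∏ i, (q i / p i) ^ p i ≤ 1 :=
    calc ∏ i, (q i / p i) ^ p i
        ≤ ∑ i, p i * (q i / p i) :=
          geom_mean_le_arith_mean_weighted _ _ _ (fun i _ ↦ hp.1 i) hp.2
            fun i _ ↦ div_nonneg (hq.1 i) (hp.1 i)
      _ ≤ ∑ i, q i := Finset.sum_le_sum fun i _ ↦ by
          rcases eq_or_ne (p i) 0 with h | h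
          · simpa [h] using hq.1 i
          · rw [mul_div_cancel₀ _ h]
      _ = 1 := hq.2
  have hfactor (i : ι) : q i ^ p i = (q i / p i) ^ p i * p i ^ p i := by
    rcases (hp.1 i).eq_or_lt with h | h
    · simp [← h]
    · rw [← mul_rpow (div_nonneg (hq.1 i) h.le) h.le, div_mul_cancel₀ _ h.ne']
  calc ∏ i, q i ^ p i
      = (∏ i, (q i / p i) ^ p i) * ∏ i, p i ^ p i := by
        rw [← Finset.prod_mul_distrib]
        exact Finset.prod_congr rfl fun i _ ↦ hfactor i
    _ ≤ ∏ i, p i ^ p i :=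
        mul_le_of_le_one_left (Finset.prod_nonneg fun i _ ↦ rpow_nonneg (hp.1 i) _) hratio

lemma prod_rpow_mul {ι : Type*} [Fintype ι] {p q : ι → ℝ} (hq : ∀ i, 0 ≤ q i) (N : ℝ) :
    ∏ i, q i ^ (p i * N) = (∏ i, q i ^ p i) ^ N := by
  rw [← finsetProd_rpow _ _ fun i _ ↦ rpow_nonneg (hq i) _]
  exact Finset.prod_congr rfl fun i _ ↦ rpow_mul (hq i) _ _

lemma prod_rpow_mul_exp_eq {ι : Type*} [Fintype ι] {p : ι → ℝ} (hp : ∀ i, 0 < p i)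
    (hsum : ∑ i, p i = 1) {N : ℝ} (hN : 0 < N) :
    ∏ i, (p i * N) ^ (p i * N + 1 / 2) * exp (-(p i * N)) =
      (∏ i, √(p i)) * (∏ i, p i ^ (p i * N)) * (N ^ (N + Fintype.card ι / 2) * exp (-N)) := by
  have hfactor (i : ι) : (p i * N) ^ (p i * N + 1 / 2) * exp (-(p i * N)) =
      √(p i) * p i ^ (p i * N) * (N ^ (p i * N + 1 / 2) * exp (-(p i * N))) := by
    rw [mul_rpow (hp i).le hN.le, rpow_add (hp i), sqrt_eq_rpow]
    ring
  have hsumN : ∑ i, p i * N = N := by rw [← Finset.sum_mul, hsum, one_mul]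
  simp only [hfactor, Finset.prod_mul_distrib, ← rpow_sum_of_pos hN, ← exp_sum,
    Finset.sum_add_distrib, Finset.sum_neg_distrib, hsumN, Finset.sum_const, Finset.card_univ,
    nsmul_eq_mul, mul_one_div]

lemma Gamma_div_prod_Gamma_mul_prod_rpow_isTheta {ι : Type*} [Fintype ι] {p : ι → ℝ}
    (hp : ∀ i, 0 < p i) (hsum : ∑ i, p i = 1) :
    (fun N ↦ Gamma (N + 1) / (∏ i, Gamma (p i * N + 1)) * ∏ i, p i ^ (p i * N)) =Θ[atTop]
      fun N ↦ N ^ ((1 - Fintype.card ι : ℝ) / 2) := by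
  have hdenom : (fun N ↦ ∏ i, Gamma (p i * N + 1)) =Θ[atTop]
      fun N ↦ ∏ i, (p i * N) ^ (p i * N + 1 / 2) * exp (-(p i * N)) :=
    .finsetProd fun i _ ↦ isTheta_comp_tendsto Gamma_add_one_isTheta_rpow_mul_exp
      (tendsto_id.const_mul_atTop (hp i))
  have hsqrt : (∏ i, √(p i)) ≠ 0 :=
    Finset.prod_ne_zero_iff.2 fun i _ ↦ (sqrt_pos.2 (hp i)).ne'
  refine (((Gamma_add_one_isTheta_rpow_mul_exp.div hdenom).mul
    (isTheta_refl (fun N ↦ ∏ i, p i ^ (p i * N)) _)).trans_eventuallyEq ?_).trans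
    ((isTheta_const_mul_left (inv_ne_zero hsqrt)).2 (isTheta_refl _ _))
  filter_upwards [eventually_gt_atTop 0] with N hN
  have hprod : (∏ i, p i ^ (p i * N)) ≠ 0 :=
    Finset.prod_ne_zero_iff.2 fun i _ ↦ (rpow_pos_of_pos (hp i) _).ne'
  have hpow : N ^ (N + 1 / 2) =
      N ^ ((1 - Fintype.card ι : ℝ) / 2) * N ^ (N + Fintype.card ι / 2 : ℝ) := by
    rw [← rpow_add hN]
    ring_nf
  have := (rpow_pos_of_pos hN (N + Fintype.card ι / 2 : ℝ)).ne'
  rw [prod_rpow_mul_exp_eq hp hsum hN, hpow]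
  generalize (∏ i, p i ^ (p i * N)) = Q at *
  field_simp

variable {d : ℕ} {s x : Fin d → ℝ} {b : ℝ}

/-- The barycentric coordinates of a point with respect to the vertices of `Sd d`, which put the
factor `1 - ∑ i, x i` of the Dirichlet kernel on the same footing as the factors `x i`. The index
`none` stands for the vertex at the origin. -/
def barycentric (x : Fin d → ℝ) : Option (Fin d) → ℝ :=
  fun o ↦ o.elim (1 - ∑ i, x i) x

lemma sum_barycentric (x : Fin d → ℝ) : ∑ o, barycentric x o = 1 := by
  simp [barycentric, Fintype.sum_option]

lemma barycentric_mem_stdSimplex (hx : x ∈ Sd d) :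
    barycentric x ∈ stdSimplex ℝ (Option (Fin d)) := by
  refine ⟨fun o ↦ ?_, sum_barycentric x⟩
  cases o with
  | none => exact sub_nonneg.2 ((Finset.sum_le_sum fun i _ ↦ le_abs_self _).trans hx.2)
  | some i => exact (hx.1 i).1

lemma barycentric_pos (hs : s ∈ SdInt d) (o : Option (Fin d)) : 0 < barycentric s o := by
  cases o with
  | none => exact sub_pos.2 ((Finset.sum_le_sum fun i _ ↦ le_abs_self _).trans_lt hs.2)
  | some i => exact (hs.1 i).1

lemma SdInt_subset_Sd : SdInt d ⊆ Sd d :=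
  fun _ hs ↦ ⟨fun i ↦ Set.Ioo_subset_Icc_self (hs.1 i), hs.2.le⟩

lemma kappa_eq_barycentric (s : Fin d → ℝ) (b : ℝ) (x : Fin d → ℝ) :
    kappa d s b x = Gamma (b⁻¹ + d + 1) / (∏ o, Gamma (barycentric s o * b⁻¹ + 1)) *
      ∏ o, barycentric x o ^ (barycentric s o * b⁻¹) := by
  have hparam : ∑ i, (s i / b + 1) + ((1 - ∑ i, s i) / b + 1) = b⁻¹ + d + 1 := by
    rw [Finset.sum_add_distrib, ← Finset.sum_div]
    simp only [Finset.sum_const, Finset.card_univ, Fintype.card_fin, nsmul_eq_mul]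
    ring
  simp only [kappa, dirK]
  rw [hparam]
  simp only [Fintype.prod_option, barycentric, Option.elim, div_eq_mul_inv, add_sub_cancel_right,
    mul_assoc]

lemma measurable_kappa : Measurable (kappa d s b) := by
  unfold kappa dirK
  fun_prop

lemma Gamma_div_prod_Gamma_barycentric_nonneg (hs : s ∈ Sd d) (hb : 0 ≤ b) :
    0 ≤ Gamma (b⁻¹ + d + 1) / ∏ o, Gamma (barycentric s o * b⁻¹ + 1) := by
  have hΓ (o : Option (Fin d)) : 0 < Gamma (barycentric s o * b⁻¹ + 1) := by
    have := (barycentric_mem_stdSimplex hs).1 o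
    exact Gamma_pos_of_pos (by positivity)
  exact div_nonneg (Gamma_pos_of_pos (by positivity)).le (Finset.prod_nonneg fun o _ ↦ (hΓ o).le)

lemma kappa_nonneg (hs : s ∈ Sd d) (hb : 0 ≤ b) (hx : x ∈ Sd d) : 0 ≤ kappa d s b x := by
  rw [kappa_eq_barycentric]
  exact mul_nonneg (Gamma_div_prod_Gamma_barycentric_nonneg hs hb) <|
    Finset.prod_nonneg fun o _ ↦ rpow_nonneg ((barycentric_mem_stdSimplex hx).1 o) _

lemma kappa_le_kappa_self (hs : s ∈ Sd d) (hb : 0 ≤ b) (hx : x ∈ Sd d) :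
    kappa d s b x ≤ kappa d s b s := by
  have hs' := barycentric_mem_stdSimplex hs
  have hx' := barycentric_mem_stdSimplex hx
  rw [kappa_eq_barycentric, kappa_eq_barycentric]
  refine mul_le_mul_of_nonneg_left ?_ (Gamma_div_prod_Gamma_barycentric_nonneg hs hb)
  rw [prod_rpow_mul hx'.1, prod_rpow_mul hs'.1]
  exact rpow_le_rpow (Finset.prod_nonneg fun o _ ↦ rpow_nonneg (hx'.1 o) _)
    (prod_rpow_le_prod_rpow_self hs' hx') (inv_nonneg.2 hb)

lemma kappa_self_isTheta (hs : s ∈ SdInt d) :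
    (fun b ↦ kappa d s b s) =Θ[𝓝[>] 0] fun b ↦ b ^ (-(d : ℝ) / 2) := by
  have hmode : (fun N : ℝ ↦ kappa d s N⁻¹ s) =Θ[atTop] fun N ↦ N ^ ((d : ℝ) / 2) := by
    have hshift := ((Gamma_add_natCast_add_one_isTheta d).div
      (isTheta_refl (fun N ↦ ∏ o, Gamma (barycentric s o * N + 1)) _)).mul
      (isTheta_refl (fun N ↦ ∏ o, barycentric s o ^ (barycentric s o * N)) _)
    have hmultinomial := (isTheta_refl (fun N : ℝ ↦ N ^ d) atTop).mul
      (Gamma_div_prod_Gamma_mul_prod_rpow_isTheta (barycentric_pos hs) (sum_barycentric s))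
    simp only [kappa_eq_barycentric, inv_inv]
    refine (hshift.trans_eventuallyEq (.of_eq ?_)).trans (hmultinomial.trans_eventuallyEq ?_)
    · ext N
      ring
    · filter_upwards [eventually_gt_atTop 0] with N hN
      rw [← rpow_natCast, ← rpow_add hN, Fintype.card_option, Fintype.card_fin]
      push_cast
      ring_nf
  have h := isTheta_comp_tendsto hmode tendsto_inv_nhdsGT_zero
  simp only [inv_inv] at h
  refine h.trans_eventuallyEq ?_
  filter_upwards [self_mem_nhdsWithin] with b hb
  rw [inv_rpow (le_of_lt hb), ← rpow_neg (le_of_lt hb), neg_div]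

end DirichletKernel

section CovarianceInequality

open scoped ProbabilityTheory

variable {Ω : Type*} [MeasurableSpace Ω] {μ : Measure Ω} {f g h : Ω → ℝ} {M M' a : ℝ}

lemma cov_comm (f g : Ω → ℝ) : cov μ f g = cov μ g f := by
  simp only [cov, mul_comm]

lemma integral_mul_eq_integral_setIntegral_lt [SFinite μ] (hf : Measurable f)
    (hfM : ∀ᵐ ω ∂μ, f ω ∈ Set.Icc 0 M) (hh : Integrable h μ) :
    ∫ ω, f ω * h ω ∂μ = ∫ t in Set.Ioc 0 M, ∫ ω in {ω | t < f ω}, h ω ∂μ := by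
  have hint : Integrable ({z : Ω × ℝ | z.2 < f z.1}.indicator fun z ↦ h z.1)
      (μ.prod (volume.restrict (Set.Ioc 0 M))) :=
    (hh.comp_fst _).indicator (measurableSet_lt measurable_snd (hf.comp measurable_fst))
  calc ∫ ω, f ω * h ω ∂μ
      = ∫ ω, (∫ t in Set.Ioc 0 M, (Set.Iio (f ω)).indicator (fun _ ↦ h ω) t) ∂μ := by
        refine integral_congr_ae (hfM.mono fun ω hω ↦ ?_)
        have hIoo : Set.Ioc 0 M ∩ Set.Iio (f ω) = Set.Ioo 0 (f ω) := by grind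
        beta_reduce
        rw [setIntegral_indicator measurableSet_Iio, hIoo]
        simp [hω.1]
    _ = ∫ t in Set.Ioc 0 M, (∫ ω, {ω | t < f ω}.indicator h ω ∂μ) :=
        integral_integral_swap hint
    _ = ∫ t in Set.Ioc 0 M, ∫ ω in {ω | t < f ω}, h ω ∂μ := by
        simp only [integral_indicator (measurableSet_lt measurable_const hf)]

variable [IsProbabilityMeasure μ]

lemma covariance_eq_integral_mul_sub (hg : Integrable g μ)
    (hfg : Integrable (fun ω ↦ f ω * (g ω - μ[g])) μ) :
    cov[f, g; μ] = ∫ ω, f ω * (g ω - μ[g]) ∂μ := by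
  have hcenter : ∫ ω, (g ω - μ[g]) ∂μ = 0 := by
    rw [integral_sub hg (integrable_const _)]
    simp
  simp only [ProbabilityTheory.covariance, sub_mul (f _)]
  have hconst : Integrable (fun ω ↦ μ[f] * (g ω - μ[g])) μ :=
    (hg.sub (integrable_const _)).const_mul _
  rw [integral_sub hfg hconst, integral_const_mul, hcenter, mul_zero, sub_zero]

lemma covariance_eq_integral_covariance_indicator (hf : Measurable f)
    (hfM : ∀ᵐ ω ∂μ, f ω ∈ Set.Icc 0 M) (hg : Integrable g μ) :
    cov[f, g; μ] = ∫ t in Set.Ioc 0 M, cov[{ω | t < f ω}.indicator 1, g; μ] := by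
  have hcenter : Integrable (fun ω ↦ g ω - μ[g]) μ := hg.sub (integrable_const _)
  have hindicator (t : ℝ) : cov[{ω | t < f ω}.indicator 1, g; μ] =
      ∫ ω in {ω | t < f ω}, (g ω - μ[g]) ∂μ := by
    have hset : MeasurableSet {ω | t < f ω} := measurableSet_lt measurable_const hf
    have hmul : (fun ω ↦ {ω | t < f ω}.indicator 1 ω * (g ω - μ[g])) =
        {ω | t < f ω}.indicator fun ω ↦ g ω - μ[g] := by
      ext ω
      simp [Set.indicator_apply]
    rw [covariance_eq_integral_mul_sub hg (hmul ▸ hcenter.indicator hset), hmul,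
      integral_indicator hset]
  have hfg : Integrable (fun ω ↦ f ω * (g ω - μ[g])) μ :=
    hcenter.bdd_mul hf.aestronglyMeasurable
      (hfM.mono fun ω hω ↦ (norm_of_nonneg hω.1).trans_le hω.2)
  simp only [hindicator]
  rw [covariance_eq_integral_mul_sub hg hfg, integral_mul_eq_integral_setIntegral_lt hf hfM hcenter]

lemma abs_covariance_le_mul_of_forall_superlevel (hf : Measurable f)
    (hfM : ∀ᵐ ω ∂μ, f ω ∈ Set.Icc 0 M) (hg : Integrable g μ)
    (ha : ∀ t, |cov[{ω | t < f ω}.indicator 1, g; μ]| ≤ a) : |cov[f, g; μ]| ≤ M * a := by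
  obtain ⟨ω, hω⟩ := hfM.exists
  have hM : 0 ≤ M := hω.1.trans hω.2
  have hbound := norm_setIntegral_le_of_norm_le_const (μ := volume) (s := Set.Ioc 0 M) (by simp)
    fun t _ ↦ (norm_eq_abs _).trans_le (ha t)
  rw [covariance_eq_integral_covariance_indicator hf hfM hg]
  simpa [hM, mul_comm] using hbound

lemma covariance_indicator_one {A B : Set Ω} (hA : MeasurableSet A) (hB : MeasurableSet B) :
    cov[A.indicator 1, B.indicator 1; μ] = μ.real (A ∩ B) - μ.real A * μ.real B := by
  rw [ProbabilityTheory.covariance_eq_sub, ← Set.inter_indicator_one]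
  · simp only [integral_indicator_one hA, integral_indicator_one hB,
      integral_indicator_one (hA.inter hB)]
  · exact memLp_indicator_const 2 hA 1 (by simp)
  · exact memLp_indicator_const 2 hB 1 (by simp)

lemma abs_covariance_le_mul_mul_of_forall_superlevel (hf : Measurable f) (hg : Measurable g)
    (hfM : ∀ᵐ ω ∂μ, f ω ∈ Set.Icc 0 M) (hgM : ∀ᵐ ω ∂μ, g ω ∈ Set.Icc 0 M')
    (ha : ∀ t u, |μ.real ({ω | t < f ω} ∩ {ω | u < g ω}) -
      μ.real {ω | t < f ω} * μ.real {ω | u < g ω}| ≤ a) :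
    |cov[f, g; μ]| ≤ M * (M' * a) := by
  have hset {k : Ω → ℝ} (hk : Measurable k) (t : ℝ) : MeasurableSet {ω | t < k ω} :=
    measurableSet_lt measurable_const hk
  refine abs_covariance_le_mul_of_forall_superlevel hf hfM
    (.of_mem_Icc 0 M' hg.aemeasurable hgM) fun t ↦ ?_
  rw [ProbabilityTheory.covariance_comm]
  refine abs_covariance_le_mul_of_forall_superlevel hg hgM
    ((integrable_const 1).indicator (hset hf t)) fun u ↦ ?_
  rw [ProbabilityTheory.covariance_comm, covariance_indicator_one (hset hf t) (hset hg u)]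
  exact ha t u

lemma cov_eq_covariance (hf : MemLp f 2 μ) (hg : MemLp g 2 μ) : cov μ f g = cov[f, g; μ] :=
  (ProbabilityTheory.covariance_eq_sub hf hg).symm

end CovarianceInequality

section StrongMixing

variable {Ω : Type*} [MeasurableSpace Ω] {P : Measure Ω} {d : ℕ} {X : ℕ → Ω → Fin d → ℝ}

lemma exists_alphaMix_le_of_isBigO {ν : ℝ}
    (h : (fun m ↦ alphaMix P X m) =O[atTop] fun m : ℕ ↦ (m : ℝ) ^ (-ν)) :
    ∃ A, 0 < A ∧ ∀ m, 1 ≤ m → alphaMix P X m ≤ A * (m : ℝ) ^ (-ν) := by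
  obtain ⟨A, hA, hbound⟩ := bound_of_isBigO_nat_atTop h
  refine ⟨A, hA, fun m hm ↦ (le_norm_self _).trans ?_⟩
  have hpos : 0 < (m : ℝ) ^ (-ν) := by positivity
  simpa only [norm_of_nonneg hpos.le] using hbound hpos.ne'

variable [IsProbabilityMeasure P] {i j : ℕ}

lemma abs_measureReal_inter_sub_mul_le_one (A B : Set Ω) :
    |P.real (A ∩ B) - P.real A * P.real B| ≤ 1 :=
  abs_sub_le_of_nonneg_of_le measureReal_nonneg measureReal_le_one (by positivity)
    (mul_le_one₀ measureReal_le_one measureReal_nonneg measureReal_le_one)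

lemma abs_measureReal_inter_sub_mul_le_alphaMix {A B : Set Ω} (hi : 1 ≤ i) (hij : i ≤ j)
    (hA : MeasurableSet[MeasurableSpace.comap (X i) inferInstance] A)
    (hB : MeasurableSet[MeasurableSpace.comap (X j) inferInstance] B) :
    |P.real (A ∩ B) - P.real A * P.real B| ≤ alphaMix P X (j - i) := by
  refine le_csSup ⟨1, ?_⟩ ⟨i, hi, A, B, ?_, ?_, rfl⟩
  · rintro r ⟨-, -, A, B, -, -, rfl⟩
    exact abs_measureReal_inter_sub_mul_le_one A B
  · exact le_iSup₂_of_le (f := fun k _ ↦ MeasurableSpace.comap (X k) inferInstance) i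
      (Set.right_mem_Icc.2 hi) le_rfl _ hA
  · exact le_iSup₂_of_le (f := fun k _ ↦ MeasurableSpace.comap (X k) inferInstance) j
      (Set.mem_Ici.2 (by lia)) le_rfl _ hB

lemma abs_cov_le_mul_alphaMix {φ ψ : (Fin d → ℝ) → ℝ} {M M' : ℝ}
    (hXi : Measurable (X i)) (hXj : Measurable (X j)) (hφ : Measurable φ) (hψ : Measurable ψ)
    (hφM : ∀ᵐ ω ∂P, φ (X i ω) ∈ Set.Icc 0 M)
    (hψM : ∀ᵐ ω ∂P, ψ (X j ω) ∈ Set.Icc 0 M') (hi : 1 ≤ i) (hij : i ≤ j) :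
    |cov P (fun ω ↦ φ (X i ω)) (fun ω ↦ ψ (X j ω))| ≤ M * (M' * alphaMix P X (j - i)) := by
  have hφX := hφ.comp hXi
  have hψX := hψ.comp hXj
  rw [cov_eq_covariance (memLp_of_bounded hφM hφX.aestronglyMeasurable 2)
    (memLp_of_bounded hψM hψX.aestronglyMeasurable 2)]
  exact abs_covariance_le_mul_mul_of_forall_superlevel hφX hψX hφM hψM fun t u ↦
    abs_measureReal_inter_sub_mul_le_alphaMix hi hij
      ⟨_, measurableSet_lt measurable_const hφ, rfl⟩ ⟨_, measurableSet_lt measurable_const hψ, rfl⟩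

lemma abs_cov_le_mul_alphaMix_dist {φ ψ : (Fin d → ℝ) → ℝ} {M M' : ℝ}
    (hXi : Measurable (X i)) (hXj : Measurable (X j)) (hφ : Measurable φ) (hψ : Measurable ψ)
    (hφM : ∀ᵐ ω ∂P, φ (X i ω) ∈ Set.Icc 0 M)
    (hψM : ∀ᵐ ω ∂P, ψ (X j ω) ∈ Set.Icc 0 M') (hi : 1 ≤ i) (hj : 1 ≤ j) :
    |cov P (fun ω ↦ φ (X i ω)) (fun ω ↦ ψ (X j ω))| ≤
      M * (M' * alphaMix P X (Nat.dist i j)) := by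
  rcases le_total i j with hij | hji
  · rw [Nat.dist_eq_sub_of_le hij]
    exact abs_cov_le_mul_alphaMix hXi hXj hφ hψ hφM hψM hi hij
  · rw [Nat.dist_eq_sub_of_le_right hji, cov_comm, mul_left_comm]
    exact abs_cov_le_mul_alphaMix hXj hXi hψ hφ hψM hφM hj hji

end StrongMixing

section SeparatedSums

lemma sum_comp_dist_le {T K : Finset ℕ} {c : ℕ → ℝ} (i : ℕ) (hT : ∀ j ∈ T, Nat.dist i j ∈ K)
    (hc : ∀ k ∈ K, 0 ≤ c k) : ∑ j ∈ T, c (Nat.dist i j) ≤ 2 * ∑ k ∈ K, c k := by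
  rw [← Finset.sum_fiberwise_of_maps_to' hT, Finset.mul_sum]
  refine Finset.sum_le_sum fun k hk ↦ ?_
  have hfiber : {j ∈ T | Nat.dist i j = k} ⊆ {i - k, i + k} := by
    intro j hj
    have hdist : Nat.dist i j = k := (Finset.mem_filter.1 hj).2
    rw [Finset.mem_insert, Finset.mem_singleton]
    grind [Nat.dist]
  rw [Finset.sum_const, nsmul_eq_mul]
  gcongr
  · exact hc k hk
  · exact_mod_cast (Finset.card_le_card hfiber).trans Finset.card_le_two

lemma integral_rpow_neg_le {ν x y : ℝ} (hν : 1 < ν) (hx : 0 < x) (hxy : x ≤ y) :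
    ∫ t in x..y, t ^ (-ν) ≤ x ^ (-ν + 1) / (ν - 1) := by
  have hzero : (0 : ℝ) ∉ Set.uIcc x y := by
    rw [Set.uIcc_of_le hxy]
    exact fun h ↦ hx.not_ge h.1
  have hy : 0 ≤ y ^ (-ν + 1) := rpow_nonneg (hx.le.trans hxy) _
  rw [integral_rpow (.inr ⟨by linarith, hzero⟩), ← neg_div_neg_eq, neg_sub,
    show -(-ν + 1) = ν - 1 by ring]
  gcongr
  linarith

lemma sum_rpow_neg_le {ν : ℝ} (hν : 1 < ν) {β : ℕ} (hβ : 1 ≤ β) {K : Finset ℕ}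
    (hK : ∀ k ∈ K, β < k) : ∑ k ∈ K, (k : ℝ) ^ (-ν) ≤ (β : ℝ) ^ (-ν + 1) / (ν - 1) := by
  have hβ0 : (0 : ℝ) < β := by exact_mod_cast hβ
  set n := max β (K.sup id)
  have hβn : β ≤ n := le_max_left _ _
  have hsub : K ⊆ Finset.Ico (β + 1) (n + 1) := fun k hk ↦
    Finset.mem_Ico.2 ⟨hK k hk, Nat.lt_succ_of_le ((Finset.le_sup (f := id) hk).trans
      (le_max_right _ _))⟩
  have hanti : AntitoneOn (fun t : ℝ ↦ t ^ (-ν)) (Set.Icc β n) := fun t ht u _ htu ↦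
    rpow_le_rpow_of_nonpos (hβ0.trans_le ht.1) htu (by linarith)
  calc ∑ k ∈ K, (k : ℝ) ^ (-ν)
      ≤ ∑ k ∈ Finset.Ico (β + 1) (n + 1), (k : ℝ) ^ (-ν) :=
        Finset.sum_le_sum_of_subset_of_nonneg hsub fun k _ _ ↦ by positivity
    _ = ∑ k ∈ Finset.Ico β n, ((k + 1 : ℕ) : ℝ) ^ (-ν) :=
        (Finset.sum_Ico_add' (fun k : ℕ ↦ (k : ℝ) ^ (-ν)) β n 1).symm
    _ ≤ ∫ t in (β : ℝ)..n, t ^ (-ν) := hanti.sum_le_integral_Ico hβn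
    _ ≤ (β : ℝ) ^ (-ν + 1) / (ν - 1) := integral_rpow_neg_le hν hβ0 (by exact_mod_cast hβn)

lemma abs_sum_le_of_lt_dist {ν : ℝ} (hν : 1 < ν) {β : ℕ} (hβ : 1 ≤ β) (i : ℕ) {J : Finset ℕ}
    {a : ℕ → ℝ} {D : ℝ} (hD : 0 ≤ D) (hJ : ∀ j ∈ J, β < Nat.dist i j)
    (ha : ∀ j ∈ J, |a j| ≤ D * (Nat.dist i j : ℝ) ^ (-ν)) :
    |∑ j ∈ J, a j| ≤ 2 * D / (ν - 1) * (β : ℝ) ^ (-ν + 1) := by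
  have hK : ∀ k ∈ J.image (Nat.dist i), β < k := by simpa using hJ
  calc |∑ j ∈ J, a j|
      ≤ ∑ j ∈ J, D * (Nat.dist i j : ℝ) ^ (-ν) :=
        (Finset.abs_sum_le_sum_abs _ _).trans (Finset.sum_le_sum ha)
    _ ≤ 2 * ∑ k ∈ J.image (Nat.dist i), D * (k : ℝ) ^ (-ν) :=
        sum_comp_dist_le (c := fun k ↦ D * (k : ℝ) ^ (-ν)) i
          (fun _ ↦ Finset.mem_image_of_mem _) fun k _ ↦ by positivity
    _ = 2 * D * ∑ k ∈ J.image (Nat.dist i), (k : ℝ) ^ (-ν) := by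
        rw [← Finset.mul_sum, mul_assoc]
    _ ≤ 2 * D * ((β : ℝ) ^ (-ν + 1) / (ν - 1)) := by
        gcongr
        exact sum_rpow_neg_le hν hβ hK
    _ = 2 * D / (ν - 1) * (β : ℝ) ^ (-ν + 1) := by ring

end SeparatedSums

section FarOffDiagonal

variable {Ω : Type*} [MeasurableSpace Ω] {P : Measure Ω} [IsProbabilityMeasure P] {d : ℕ}
  {X : ℕ → Ω → Fin d → ℝ} {ν : ℝ}

lemma abs_sum_sum_cov_le_of_alphaMix_le {φ : (Fin d → ℝ) → ℝ} {M A : ℝ}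
    (hX : ∀ k, Measurable (X k)) (hφ : Measurable φ)
    (hφM : ∀ k, ∀ᵐ ω ∂P, φ (X k ω) ∈ Set.Icc 0 M) (hν : 1 < ν) (hA : 0 ≤ A)
    (hα : ∀ m, 1 ≤ m → alphaMix P X m ≤ A * (m : ℝ) ^ (-ν)) {β : ℕ} (hβ : 1 ≤ β) (n : ℕ) :
    |∑ i ∈ Finset.Icc 1 n, ∑ j ∈ Finset.Icc 1 n,
        if β + 1 ≤ Nat.dist i j ∧ Nat.dist i j ≤ n - 1 then
          cov P (fun ω ↦ φ (X i ω)) (fun ω ↦ φ (X j ω)) else 0| ≤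
      n * (2 * (M ^ 2 * A) / (ν - 1) * (β : ℝ) ^ (-ν + 1)) := by
  have hrow (i : ℕ) (hi : i ∈ Finset.Icc 1 n) :
      |∑ j ∈ Finset.Icc 1 n, if β + 1 ≤ Nat.dist i j ∧ Nat.dist i j ≤ n - 1 then
        cov P (fun ω ↦ φ (X i ω)) (fun ω ↦ φ (X j ω)) else 0| ≤
      2 * (M ^ 2 * A) / (ν - 1) * (β : ℝ) ^ (-ν + 1) := by
    rw [← Finset.sum_filter]
    refine abs_sum_le_of_lt_dist hν hβ i (by positivity)
      (fun j hj ↦ (Finset.mem_filter.1 hj).2.1) fun j hj ↦ ?_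
    obtain ⟨hj, hfar, -⟩ := Finset.mem_filter.1 hj
    calc |cov P (fun ω ↦ φ (X i ω)) (fun ω ↦ φ (X j ω))|
        ≤ M * (M * alphaMix P X (Nat.dist i j)) :=
          abs_cov_le_mul_alphaMix_dist (hX i) (hX j) hφ hφ (hφM i) (hφM j)
            (Finset.mem_Icc.1 hi).1 (Finset.mem_Icc.1 hj).1
      _ = M ^ 2 * alphaMix P X (Nat.dist i j) := by ring
      _ ≤ M ^ 2 * (A * (Nat.dist i j : ℝ) ^ (-ν)) := by
          gcongr
          exact hα _ (by lia)
      _ = M ^ 2 * A * (Nat.dist i j : ℝ) ^ (-ν) := (mul_assoc _ _ _).symm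
  refine (Finset.abs_sum_le_sum_abs _ _).trans ?_
  simpa using Finset.sum_le_card_nsmul _ _ _ hrow

theorem far_off_diagonal_cov_sum_bound_general {s : Fin d → ℝ} {b : ℕ → ℝ} {β : ℕ → ℕ}
    (hmeas : ∀ i, Measurable (X i)) (hval : ∀ i, ∀ᵐ ω ∂P, X i ω ∈ Sd d) (hν : 1 < ν)
    (hmix : (fun m ↦ alphaMix P X m) =O[atTop] fun m : ℕ ↦ (m : ℝ) ^ (-ν)) (hs : s ∈ SdInt d)
    (hb : Tendsto b atTop (𝓝[>] 0)) (hβ : ∀ᶠ n in atTop, 1 ≤ β n) :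
    (fun n : ℕ ↦ ∑ i ∈ Finset.Icc 1 n, ∑ j ∈ Finset.Icc 1 n,
        if β n + 1 ≤ Nat.dist i j ∧ Nat.dist i j ≤ n - 1 then
          cov P (fun ω ↦ kappa d s (b n) (X i ω)) (fun ω ↦ kappa d s (b n) (X j ω)) else 0)
      =O[atTop] fun n : ℕ ↦ (n : ℝ) * b n ^ (-(d : ℝ)) * (β n : ℝ) ^ (-ν + 1) := by
  obtain ⟨A, hA, hα⟩ := exists_alphaMix_le_of_isBigO hmix
  have hbpos : ∀ᶠ n in atTop, 0 < b n := hb.eventually self_mem_nhdsWithin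
  have hpeak : (fun n ↦ kappa d s (b n) s ^ 2) =O[atTop] fun n ↦ b n ^ (-(d : ℝ)) := by
    refine ((isTheta_comp_tendsto (kappa_self_isTheta hs) hb).1.pow 2).trans_eventuallyEq ?_
    filter_upwards [hbpos] with n hbn
    rw [← rpow_mul_natCast hbn.le]
    push_cast
    ring_nf
  refine (IsBigO.of_bound (2 * A / (ν - 1)) ?_).trans
    (((isBigO_refl (fun n : ℕ ↦ (n : ℝ)) _).mul hpeak).mul
      (isBigO_refl (fun n ↦ (β n : ℝ) ^ (-ν + 1)) _))
  filter_upwards [hbpos, hβ] with n hbn hβn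
  have hκ (i : ℕ) : ∀ᵐ ω ∂P, kappa d s (b n) (X i ω) ∈ Set.Icc 0 (kappa d s (b n) s) :=
    (hval i).mono fun ω hω ↦ ⟨kappa_nonneg (SdInt_subset_Sd hs) hbn.le hω,
      kappa_le_kappa_self (SdInt_subset_Sd hs) hbn.le hω⟩
  refine (abs_sum_sum_cov_le_of_alphaMix_le hmeas measurable_kappa hκ hν hA.le hα hβn n).trans_eq ?_
  rw [norm_of_nonneg (by positivity)]
  ring

end FarOffDiagonal

/-- Far-off-diagonal covariance sum bound `|C_{2,n}| ≪_s n b^{-d} β_n^{-ν+1}`. -/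
theorem far_off_diagonal_cov_sum_bound {Ω : Type*} [MeasurableSpace Ω]
    (P : Measure Ω) [IsProbabilityMeasure P] (d : ℕ) (hd : 1 ≤ d)
    (X : ℕ → Ω → (Fin d → ℝ)) (hmeas : ∀ i, Measurable (X i))
    (hval : ∀ i ω, X i ω ∈ Sd d)
    (hstat : IsStrictlyStationary P X)
    (ν : ℝ) (hν : 1 < ν)
    (hA3 : (fun m : ℕ => alphaMix P X m) =O[atTop] fun m : ℕ => (m : ℝ) ^ (-ν))
    (s : Fin d → ℝ) (hs : s ∈ SdInt d)
    (b : ℕ → ℝ) (hbpos : ∀ n, 0 < b n) (hb0 : Tendsto b atTop (𝓝 0))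
    (β : ℕ → ℕ) (hβ : ∀ n : ℕ, 2 ≤ n → 1 ≤ β n ∧ β n ≤ n - 1) :
    (fun n : ℕ => ∑ i ∈ Finset.Icc 1 n, ∑ j ∈ Finset.Icc 1 n,
        if β n + 1 ≤ Nat.dist i j ∧ Nat.dist i j ≤ n - 1 then
          cov P (fun ω => kappa d s (b n) (X i ω)) (fun ω => kappa d s (b n) (X j ω))
        else 0)
      =O[atTop]
      (fun n : ℕ => (n : ℝ) * (b n) ^ (-(d : ℝ)) * (β n : ℝ) ^ (-ν + 1)) :=
  far_off_diagonal_cov_sum_bound_general hmeas (fun i ↦ ae_of_all _ (hval i)) hν hA3 hs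
    (tendsto_nhdsWithin_iff.2 ⟨hb0, .of_forall hbpos⟩)
    ((eventually_ge_atTop 2).mono fun n hn ↦ (hβ n hn).1)
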